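/- Let k ≥ 2 be an integer and let G_k be the niche graph of the doubly partial order associated with X_{(0,k)} ∪ W_k. Then the sequence A_k of 2k−1 points, namely (k−2,1), (k−3,2), …, (0,k−1), (0,k), (1,k), (2,k−1), …, (k−1,2) (i.e., the points (i, k−1−i) for i = k−2 down to 0, followed by (0,k), followed by (i+1, k−i) for i = 0 up to k−2), forms an induced path of length 2k−2 in G_k: consecutive points of the sequence are adjacent in G_k, and any two points of the sequence whose positions in the sequence differ by at least 2 are non-adjacent in G_k. -/

import Mathlib

/-!
Write `V = X_{(0,k)} ∪ W_k`. Each point of `V` other than `(1, k+1)` has coordinate sum at most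
`k+1`, and each point other than `(-1, k-1)` has coordinate sum at least `k-1`. Hence no point of
`V` strictly dominates a point `(x, y)` with `x + y ≥ k+1` and `x ≥ 1` (`no_predator`), and no point
of `V` is strictly dominated by a point `(x, y)` with `x + y ≤ k-1` and `y ≤ k-1` (`no_prey`).

Two vertices have a common predator iff their coordinatewise maximum is strictly dominated by a
point of `V`, and dually for common preys and the coordinatewise minimum. For points of the sequence
at positions differing by at least two, the maximum and the minimum fall under these two
lemmas, so the points are not adjacent. Consecutive points are adjacent because of an explicit
common neighbour: `(i+1/3, k-i+1/3)` is a common predator on the lower half, `(i-1/3, k-i-1/3)` a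
common prey on the upper half, and `(1, k+1)`, `(-1, k-1)` serve the two edges at `(0, k)`.
-/

open scoped Classical

/-- `x ≺ y` iff both coordinates of `x` are strictly smaller. -/
def prec (x y : ℝ × ℝ) : Prop := x.1 < y.1 ∧ x.2 < y.2

/-- Adjacency in the niche graph of the doubly partial order associated with `V`:
two distinct vertices of `V` are adjacent iff they have a common prey or a common
predator in `V`. -/
def nicheAdj (V : Finset (ℝ × ℝ)) (u v : ℝ × ℝ) : Prop :=
  u ∈ V ∧ v ∈ V ∧ u ≠ v ∧
    ((∃ a ∈ V, prec a u ∧ prec a v) ∨ (∃ a ∈ V, prec u a ∧ prec v a))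

/-- `X_{(i,j)} = {(i-1,j-1), (i,j), (i+1,j+1)}`. -/
noncomputable def Xset (p : ℝ × ℝ) : Finset (ℝ × ℝ) :=
  {(p.1 - 1, p.2 - 1), p, (p.1 + 1, p.2 + 1)}

/-- The set `W_k`: integer points `(i, k-1-i)` and `(i+1, k-i)` for
`i = 0, …, k-2`, together with the non-integer points `(i-1/3, k-i-1/3)` and
`(i+1/3, k-i+1/3)` for `i = 1, …, k-2`. -/
noncomputable def Wk (k : ℕ) : Finset (ℝ × ℝ) :=
  ((Finset.range (k - 1)).biUnion fun i =>
    {((i : ℝ), (k : ℝ) - 1 - i), ((i : ℝ) + 1, (k : ℝ) - i)}) ∪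
  ((Finset.Icc 1 (k - 2)).biUnion fun i =>
    {((i : ℝ) - 1/3, (k : ℝ) - i - 1/3), ((i : ℝ) + 1/3, (k : ℝ) - i + 1/3)})

/-- The sequence `A_k` (0-indexed): for `j = 0, …, k-2` the point
`(k-2-j, j+1)` (i.e. `(i, k-1-i)` for `i = k-2` down to `0`), then `(0, k)` at
position `k-1`, then for `j = k, …, 2k-2` the point `(j-k+1, 2k-j)`
(i.e. `(i+1, k-i)` for `i = 0, …, k-2`). -/
noncomputable def Aseq (k : ℕ) (j : ℕ) : ℝ × ℝ :=
  if j < k - 1 then ((k : ℝ) - 2 - j, (j : ℝ) + 1)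
  else if j = k - 1 then (0, (k : ℝ))
  else ((j : ℝ) - k + 1, 2 * (k : ℝ) - j)

lemma mem_vertices_iff {k : ℕ} (hk : 2 ≤ k) (a : ℝ × ℝ) :
    a ∈ Xset (0, (k : ℝ)) ∪ Wk k ↔
      a = (-1, (k : ℝ) - 1) ∨ a = (0, (k : ℝ)) ∨ a = (1, (k : ℝ) + 1) ∨
      (∃ m : ℕ, m + 2 ≤ k ∧ a = ((m : ℝ), (k : ℝ) - 1 - m)) ∨
      (∃ m : ℕ, m + 2 ≤ k ∧ a = ((m : ℝ) + 1, (k : ℝ) - m)) ∨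
      (∃ m : ℕ, 1 ≤ m ∧ m + 2 ≤ k ∧ a = ((m : ℝ) - 1/3, (k : ℝ) - m - 1/3)) ∨
      (∃ m : ℕ, 1 ≤ m ∧ m + 2 ≤ k ∧ a = ((m : ℝ) + 1/3, (k : ℝ) - m + 1/3)) := by
  have h1 : ∀ m, m < k - 1 ↔ m + 2 ≤ k := by omega
  have h2 : ∀ m, m ≤ k - 2 ↔ m + 2 ≤ k := by omega
  simp only [Xset, Wk, Finset.mem_union, Finset.mem_insert, Finset.mem_singleton,
    Finset.mem_biUnion, Finset.mem_range, Finset.mem_Icc, h1, h2, zero_sub, zero_add,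
    and_or_left, exists_or, and_assoc, or_assoc]

lemma no_predator {k : ℕ} (hk : 2 ≤ k) {x y : ℝ} (hx : 1 ≤ x) (hxy : (k : ℝ) + 1 ≤ x + y)
    {a : ℝ × ℝ} (ha : a ∈ Xset (0, (k : ℝ)) ∪ Wk k) (h1 : x < a.1) (h2 : y < a.2) : False := by
  rcases (mem_vertices_iff hk a).1 ha with
    rfl | rfl | rfl | ⟨m, -, rfl⟩ | ⟨m, -, rfl⟩ | ⟨m, -, -, rfl⟩ | ⟨m, -, -, rfl⟩ <;>
    simp only at h1 h2 <;> linarith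

lemma no_prey {k : ℕ} (hk : 2 ≤ k) {x y : ℝ} (hy : y ≤ (k : ℝ) - 1) (hxy : x + y ≤ (k : ℝ) - 1)
    {a : ℝ × ℝ} (ha : a ∈ Xset (0, (k : ℝ)) ∪ Wk k) (h1 : a.1 < x) (h2 : a.2 < y) : False := by
  rcases (mem_vertices_iff hk a).1 ha with
    rfl | rfl | rfl | ⟨m, -, rfl⟩ | ⟨m, -, rfl⟩ | ⟨m, -, -, rfl⟩ | ⟨m, -, -, rfl⟩ <;>
    simp only at h1 h2 <;> linarith

/-- Non-adjacency criterion: `(x, y)` is a lower bound for the coordinatewise maximum of `u` and `v`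
to which `no_predator` applies, and `(x', y')` an upper bound for their coordinatewise minimum to
which `no_prey` applies. -/
lemma not_nicheAdj_of {k : ℕ} (hk : 2 ≤ k) {u v : ℝ × ℝ} (x y x' y' : ℝ)
    (hx : x ≤ u.1 ∨ x ≤ v.1) (hy : y ≤ u.2 ∨ y ≤ v.2)
    (hx' : u.1 ≤ x' ∨ v.1 ≤ x') (hy' : u.2 ≤ y' ∨ v.2 ≤ y')
    (h1 : 1 ≤ x) (h2 : (k : ℝ) + 1 ≤ x + y)
    (h3 : y' ≤ (k : ℝ) - 1) (h4 : x' + y' ≤ (k : ℝ) - 1) :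
    ¬ nicheAdj (Xset (0, (k : ℝ)) ∪ Wk k) u v := by
  rintro ⟨-, -, -, ⟨a, ha, hu, hv⟩ | ⟨a, ha, hu, hv⟩⟩
  · exact no_prey hk h3 h4 ha (hx'.elim hu.1.trans_le hv.1.trans_le)
      (hy'.elim hu.2.trans_le hv.2.trans_le)
  · exact no_predator hk h1 h2 ha (hx.elim (·.trans_lt hu.1) (·.trans_lt hv.1))
      (hy.elim (·.trans_lt hu.2) (·.trans_lt hv.2))

lemma nicheAdj_symm {V : Finset (ℝ × ℝ)} {u v : ℝ × ℝ} (h : nicheAdj V u v) :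
    nicheAdj V v u := by
  obtain ⟨hu, hv, hne, h⟩ := h
  exact ⟨hv, hu, hne.symm, h.imp (fun ⟨a, ha, h⟩ => ⟨a, ha, h.symm⟩)
    (fun ⟨a, ha, h⟩ => ⟨a, ha, h.symm⟩)⟩

lemma Aseq_lower {k j : ℕ} (h : j + 2 ≤ k) :
    Aseq k j = ((k : ℝ) - 2 - j, (j : ℝ) + 1) := by
  rw [Aseq, if_pos (by omega)]

lemma Aseq_mid {k j : ℕ} (h : j + 1 = k) : Aseq k j = (0, (k : ℝ)) := by
  rw [Aseq, if_neg (by omega), if_pos (by omega)]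

lemma Aseq_upper {k j : ℕ} (h : k ≤ j) (hk : 2 ≤ k) :
    Aseq k j = ((j : ℝ) - k + 1, 2 * (k : ℝ) - j) := by
  rw [Aseq, if_neg (by omega), if_neg (by omega)]

lemma position_cases (k j : ℕ) : j + 2 ≤ k ∨ j + 1 = k ∨ k ≤ j := by omega

lemma Aseq_mem {k : ℕ} (hk : 2 ≤ k) {j : ℕ} (hj : j < 2 * k - 1) :
    Aseq k j ∈ Xset (0, (k : ℝ)) ∪ Wk k := by
  rw [mem_vertices_iff hk]
  rcases position_cases k j with h | h | h
  · obtain ⟨m, rfl⟩ := Nat.exists_eq_add_of_le h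
    right; right; right; left
    refine ⟨m, by omega, ?_⟩
    rw [Aseq_lower h]
    push_cast
    ext <;> simp only <;> ring
  · right; left
    exact Aseq_mid h
  · obtain ⟨m, rfl⟩ := Nat.exists_eq_add_of_le h
    right; right; right; right; left
    refine ⟨m, by omega, ?_⟩
    rw [Aseq_upper h hk]
    push_cast
    ext <;> simp only <;> ring

lemma Aseq_ne {k : ℕ} (hk : 2 ≤ k) {i j : ℕ} (hij : i < j) : Aseq k i ≠ Aseq k j := by
  have hij' : (i : ℝ) + 1 ≤ j := by exact_mod_cast hij
  intro h
  rcases position_cases k i with hi | hi | hi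
  · have hi' : (i : ℝ) + 2 ≤ k := by exact_mod_cast hi
    rw [Aseq_lower hi] at h
    rcases position_cases k j with h' | h' | h'
    · rw [Aseq_lower h', Prod.mk.injEq] at h
      linarith [h.1]
    · rw [Aseq_mid h', Prod.mk.injEq] at h
      linarith [h.2]
    · rw [Aseq_upper h' hk, Prod.mk.injEq] at h
      linarith [h.1, h.2]
  · have h' : k ≤ j := by omega
    have hi' : (i : ℝ) + 1 = k := by exact_mod_cast hi
    rw [Aseq_mid hi, Aseq_upper h' hk, Prod.mk.injEq] at h
    linarith [h.1]
  · rw [Aseq_upper hi hk, Aseq_upper (by omega) hk, Prod.mk.injEq] at h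
    linarith [h.1]

lemma Aseq_adj {k : ℕ} (hk : 2 ≤ k) {j : ℕ} (hj : j + 1 < 2 * k - 1) :
    nicheAdj (Xset (0, (k : ℝ)) ∪ Wk k) (Aseq k j) (Aseq k (j + 1)) := by
  refine ⟨Aseq_mem hk (by omega), Aseq_mem hk hj, Aseq_ne hk (by omega), ?_⟩
  simp only [mem_vertices_iff hk]
  rcases position_cases k j with h | h | h
  · right
    rcases Nat.eq_or_lt_of_le h with h' | h'
    · refine ⟨(1, (k : ℝ) + 1), by simp, ?_⟩
      rw [Aseq_lower h, Aseq_mid h']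
      have : (j : ℝ) + 2 = k := by exact_mod_cast h'
      simp only [prec]
      refine ⟨⟨?_, ?_⟩, ?_, ?_⟩ <;> linarith
    · obtain ⟨m, hm⟩ := Nat.exists_eq_add_of_le h
      refine ⟨((m : ℝ) + 1/3, (k : ℝ) - m + 1/3), ?_, ?_⟩
      · iterate 6 right
        exact ⟨m, by omega, by omega, rfl⟩
      · rw [Aseq_lower h, Aseq_lower (by omega)]
        have : (k : ℝ) = j + 2 + m := by exact_mod_cast hm
        simp only [prec]
        push_cast
        refine ⟨⟨?_, ?_⟩, ?_, ?_⟩ <;> linarith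
  · left
    refine ⟨(-1, (k : ℝ) - 1), by simp, ?_⟩
    rw [Aseq_mid h, Aseq_upper h.ge hk]
    have : (j : ℝ) + 1 = k := by exact_mod_cast h
    simp only [prec]
    push_cast
    refine ⟨⟨?_, ?_⟩, ?_, ?_⟩ <;> linarith
  · left
    -- The positions `j`, `j + 1` carry `(m, k-m+1)` and `(m+1, k-m)` for `m = j + 1 - k`.
    obtain ⟨m, hm⟩ := Nat.exists_eq_add_of_le h
    refine ⟨(((m + 1 : ℕ) : ℝ) - 1/3, (k : ℝ) - (m + 1 : ℕ) - 1/3), ?_, ?_⟩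
    · iterate 5 right
      left
      exact ⟨m + 1, by omega, by omega, rfl⟩
    · rw [Aseq_upper h hk, Aseq_upper (by omega) hk]
      have : (j : ℝ) = k + m := by exact_mod_cast hm
      simp only [prec]
      push_cast
      refine ⟨⟨?_, ?_⟩, ?_, ?_⟩ <;> linarith

lemma Aseq_not_adj {k : ℕ} (hk : 2 ≤ k) {i j : ℕ} (hj : j < 2 * k - 1) (hij : i + 2 ≤ j) :
    ¬ nicheAdj (Xset (0, (k : ℝ)) ∪ Wk k) (Aseq k i) (Aseq k j) := by
  have hij' : (i : ℝ) + 2 ≤ j := by exact_mod_cast hij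
  have hi0 : (0 : ℝ) ≤ i := Nat.cast_nonneg i
  have hj2 : (j : ℝ) + 2 ≤ 2 * k := by exact_mod_cast (by omega : j + 2 ≤ 2 * k)
  rcases position_cases k i with hi | hi | hi
  · have hi' : (i : ℝ) + 2 ≤ k := by exact_mod_cast hi
    rw [Aseq_lower hi]
    rcases position_cases k j with h | h | h
    · have h' : (j : ℝ) + 2 ≤ k := by exact_mod_cast h
      rw [Aseq_lower h]
      exact not_nicheAdj_of hk _ _ _ _ (.inl le_rfl) (.inr le_rfl) (.inl le_rfl) (.inl le_rfl)
        (by linarith) (by linarith) (by linarith) (by linarith)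
    · have h' : (j : ℝ) + 1 = k := by exact_mod_cast h
      rw [Aseq_mid h]
      exact not_nicheAdj_of hk _ _ _ _ (.inl le_rfl) (.inr le_rfl) (.inl le_rfl) (.inl le_rfl)
        (by linarith) (by linarith) (by linarith) (by linarith)
    · have h' : (k : ℝ) ≤ j := by exact_mod_cast h
      rw [Aseq_upper h hk]
      exact not_nicheAdj_of hk _ _ _ _ (.inr le_rfl) (.inr le_rfl) (.inl le_rfl) (.inl le_rfl)
        (by linarith) (by linarith) (by linarith) (by linarith)
  · have hi' : (i : ℝ) + 1 = k := by exact_mod_cast hi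
    have h : k ≤ j := by omega
    rw [Aseq_mid hi, Aseq_upper h hk]
    exact not_nicheAdj_of hk _ _ _ _ (.inr le_rfl) (.inr le_rfl) (.inl le_rfl) (.inr le_rfl)
      (by linarith) (by linarith) (by linarith) (by linarith)
  · have hi' : (k : ℝ) ≤ i := by exact_mod_cast hi
    rw [Aseq_upper hi hk, Aseq_upper (by omega) hk]
    exact not_nicheAdj_of hk _ _ _ _ (.inr le_rfl) (.inr le_rfl) (.inl le_rfl) (.inr le_rfl)
      (by linarith) (by linarith) (by linarith) (by linarith)

/-- The sequence `A_k` forms an induced path of length `2k-2` in the niche graph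
of the doubly partial order associated with `X_{(0,k)} ∪ W_k`: its `2k-1` points
are distinct, consecutive points are adjacent, and points whose positions differ
by at least `2` are non-adjacent. -/
theorem stmt8 (k : ℕ) (hk : 2 ≤ k) :
    (∀ i j, i < 2 * k - 1 → j < 2 * k - 1 → Aseq k i = Aseq k j → i = j) ∧
    (∀ j, j + 1 < 2 * k - 1 →
      nicheAdj (Xset (0, (k : ℝ)) ∪ Wk k) (Aseq k j) (Aseq k (j + 1))) ∧
    (∀ i j, i < 2 * k - 1 → j < 2 * k - 1 → (i + 2 ≤ j ∨ j + 2 ≤ i) →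
      ¬ nicheAdj (Xset (0, (k : ℝ)) ∪ Wk k) (Aseq k i) (Aseq k j)) := by
  refine ⟨fun i j hi hj h => ?_, fun j hj => Aseq_adj hk hj, fun i j hi hj hij => ?_⟩
  · rcases lt_trichotomy i j with h' | h' | h'
    · exact (Aseq_ne hk h' h).elim
    · exact h'
    · exact (Aseq_ne hk h' h.symm).elim
  · rcases hij with hij | hij
    · exact Aseq_not_adj hk hj hij
    · exact fun h => Aseq_not_adj hk hi hij (nicheAdj_symm h)
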